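/- arXiv:2107.07799 — 2 statements merged into one kernel-verified Lean document; each statement's English description precedes it below -/
import Mathlib

section
/- Assume K ≥ 2, p ≥ 1, that each S^(k) is symmetric positive semidefinite with strictly positive diagonal entries, that all sample sizes are equal, n_k = n > 0 for every k, and that λ₁ > 0 and λ₂ ≥ 0. Let Θ* be the minimizer of the fused joint graphical lasso objective F over K-tuples of symmetric positive definite p×p matrices, let Θ₀ be any K-tuple of symmetric positive definite p×p matrices, and set M := ‖Θ₀‖_F + 2‖Θ*‖_F and m := e^{−F(Θ₀)/n} · M^{1−Kp}, where ‖Θ‖_F denotes (Σ_{k=1}^K ‖Θ^(k)‖_F²)^{1/2}. Then every K-tuple Θ of symmetric positive definite p×p matrices satisfying F(Θ) ≤ F(Θ₀) and ‖Θ − Θ*‖_F ≤ ‖Θ₀ − Θ*‖_F has every eigenvalue of every block Θ^(k) contained in the interval [m, M]. -/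
open Matrix Finset

/-- The fused joint graphical lasso objective on `K`-tuples of `p × p` matrices. -/
noncomputable def fusedJGL {p K : ℕ} (n : Fin K → ℝ) (S : Fin K → Matrix (Fin p) (Fin p) ℝ)
    (l1 l2 : ℝ) (Θ : Fin K → Matrix (Fin p) (Fin p) ℝ) : ℝ :=
  (∑ k, n k * (-Real.log (Θ k).det + (S k * Θ k).trace))
    + l1 * ∑ k, ∑ i, ∑ j, (if i ≠ j then |Θ k i j| else 0)
    + l2 * ∑ k, ∑ l, (if k ≠ l then ∑ i, ∑ j, |Θ k i j - Θ l i j| else 0)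

/-- The Frobenius norm of a `K`-tuple of `p × p` matrices:
`‖Θ‖_F = (Σ_k ‖Θ^(k)‖_F²)^(1/2)`. -/
noncomputable def frobT {p K : ℕ} (Θ : Fin K → Matrix (Fin p) (Fin p) ℝ) : ℝ :=
  Real.sqrt (∑ k, ∑ i, ∑ j, (Θ k i j) ^ 2)

lemma frobT_eq_norm {p K : ℕ} (Θ : Fin K → Matrix (Fin p) (Fin p) ℝ) :
    frobT Θ = ‖(WithLp.toLp 2 (fun x : Fin K × Fin p × Fin p => Θ x.1 x.2.1 x.2.2) :
      EuclideanSpace ℝ (Fin K × Fin p × Fin p))‖ := by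
  rw [EuclideanSpace.norm_eq, frobT]
  simp [Fintype.sum_prod_type]

lemma frobT_bound {p K : ℕ} (A B C : Fin K → Matrix (Fin p) (Fin p) ℝ)
    (h : frobT (fun k => A k - B k) ≤ frobT (fun k => C k - B k)) :
    frobT A ≤ frobT C + 2 * frobT B := by
  rw [frobT_eq_norm, frobT_eq_norm] at h
  rw [frobT_eq_norm A, frobT_eq_norm B, frobT_eq_norm C]
  set a : EuclideanSpace ℝ (Fin K × Fin p × Fin p) :=
    WithLp.toLp 2 (fun x : Fin K × Fin p × Fin p => A x.1 x.2.1 x.2.2)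
  set b : EuclideanSpace ℝ (Fin K × Fin p × Fin p) :=
    WithLp.toLp 2 (fun x : Fin K × Fin p × Fin p => B x.1 x.2.1 x.2.2)
  set c : EuclideanSpace ℝ (Fin K × Fin p × Fin p) :=
    WithLp.toLp 2 (fun x : Fin K × Fin p × Fin p => C x.1 x.2.1 x.2.2)
  have h' : ‖a - b‖ ≤ ‖c - b‖ := h
  have h1 : ‖a‖ ≤ ‖a - b‖ + ‖b‖ := by simpa using norm_add_le (a - b) b
  have h2 := norm_sub_le c b
  linarith

open scoped MatrixOrder Matrix.Norms.L2Operator in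
lemma trace_mul_nonneg' {p : ℕ} {A B : Matrix (Fin p) (Fin p) ℝ}
    (hA : A.PosSemidef) (hB : B.PosSemidef) : 0 ≤ (A * B).trace := by
  obtain ⟨C, rfl⟩ := CStarAlgebra.nonneg_iff_eq_star_mul_self.mp hB.nonneg
  have h := (hA.mul_mul_conjTranspose_same C).trace_nonneg
  rwa [Matrix.trace_mul_comm, ← Matrix.mul_assoc, Matrix.trace_mul_comm] at h

lemma eig_sq_le {p : ℕ} {A : Matrix (Fin p) (Fin p) ℝ} (hA : A.IsHermitian) (i : Fin p) :
    (hA.eigenvalues i) ^ 2 ≤ ∑ a, ∑ b, (A a b) ^ 2 := by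
  set v := hA.eigenvectorBasis i with hv
  have h1 : ∑ b, (v b) ^ 2 = 1 := by
    have := hA.eigenvectorBasis.orthonormal.1 i
    rw [← hv, EuclideanSpace.norm_eq, Real.sqrt_eq_one] at this
    simpa using this
  have h2 : ∀ a, ∑ b, A a b * v b = hA.eigenvalues i * v a := by
    intro a
    have := congrFun (hA.mulVec_eigenvectorBasis i) a
    simpa [Matrix.mulVec, dotProduct] using this
  calc (hA.eigenvalues i) ^ 2 = ∑ a, (∑ b, A a b * v b) ^ 2 := by
        simp_rw [h2, mul_pow, ← Finset.mul_sum, h1, mul_one]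
    _ ≤ ∑ a, (∑ b, (A a b) ^ 2) * ∑ b, (v b) ^ 2 :=
        Finset.sum_le_sum fun a _ => Finset.sum_mul_sq_le_sq_mul_sq _ _ _
    _ = _ := by simp [h1]

lemma eig_le_frobT {p K : ℕ} (Θ : Fin K → Matrix (Fin p) (Fin p) ℝ) (k : Fin K)
    (h : (Θ k).IsHermitian) (i : Fin p) : h.eigenvalues i ≤ frobT Θ := by
  apply Real.le_sqrt_of_sq_le
  refine (eig_sq_le h i).trans ?_
  exact Finset.single_le_sum (f := fun k => ∑ a, ∑ b, (Θ k a b) ^ 2)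
    (fun _ _ => by positivity) (Finset.mem_univ k)

lemma fused_lower {p K : ℕ} (S : Fin K → Matrix (Fin p) (Fin p) ℝ) (hS : ∀ k, (S k).PosSemidef)
    (n : ℝ) (hn : 0 < n) (l1 l2 : ℝ) (hl1 : 0 < l1) (hl2 : 0 ≤ l2)
    (Θ : Fin K → Matrix (Fin p) (Fin p) ℝ) (hΘ : ∀ k, (Θ k).PosDef) :
    - (n * Real.log (∏ k, (Θ k).det)) ≤ fusedJGL (fun _ => n) S l1 l2 Θ := by
  have h1 : 0 ≤ l1 * ∑ k, ∑ i, ∑ j, (if i ≠ j then |Θ k i j| else 0) := by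
    refine mul_nonneg hl1.le (Finset.sum_nonneg fun k _ => Finset.sum_nonneg fun i _ =>
      Finset.sum_nonneg fun j _ => ?_)
    split_ifs <;> positivity
  have h2 : 0 ≤ l2 * ∑ k, ∑ l, (if k ≠ l then ∑ i, ∑ j, |Θ k i j - Θ l i j| else 0) := by
    refine mul_nonneg hl2 (Finset.sum_nonneg fun k _ => Finset.sum_nonneg fun i _ => ?_)
    split_ifs <;> positivity
  have h3 : - (n * Real.log (∏ k, (Θ k).det)) ≤
      ∑ k, n * (-Real.log (Θ k).det + (S k * Θ k).trace) := by
    rw [Real.log_prod (fun k _ => (hΘ k).det_pos.ne'), Finset.mul_sum, ← Finset.sum_neg_distrib]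
    refine Finset.sum_le_sum fun k _ => ?_
    have := mul_nonneg hn.le (trace_mul_nonneg' (hS k) (hΘ k).posSemidef)
    linarith
  unfold fusedJGL
  linarith

/-- Eigenvalue bounds on the level set of the fused joint graphical lasso objective
(equal sample sizes `n_k = n`). -/
theorem stmt3 {p K : ℕ} (hK : 2 ≤ K) (hp : 1 ≤ p)
    (S : Fin K → Matrix (Fin p) (Fin p) ℝ) (hS : ∀ k, (S k).PosSemidef)
    (hSd : ∀ k i, 0 < S k i i)
    (n : ℝ) (hn : 0 < n)
    (l1 l2 : ℝ) (hl1 : 0 < l1) (hl2 : 0 ≤ l2)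
    (Θs : Fin K → Matrix (Fin p) (Fin p) ℝ) (hΘs : ∀ k, (Θs k).PosDef)
    (hmin : ∀ Θ' : Fin K → Matrix (Fin p) (Fin p) ℝ, (∀ k, (Θ' k).PosDef) →
      fusedJGL (fun _ => n) S l1 l2 Θs ≤ fusedJGL (fun _ => n) S l1 l2 Θ')
    (Θ0 : Fin K → Matrix (Fin p) (Fin p) ℝ) (hΘ0 : ∀ k, (Θ0 k).PosDef)
    (M m : ℝ) (hM : M = frobT Θ0 + 2 * frobT Θs)
    (hm : m = Real.exp (-(fusedJGL (fun _ => n) S l1 l2 Θ0) / n) * M ^ (1 - (K * p : ℤ))) :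
    ∀ Θ : Fin K → Matrix (Fin p) (Fin p) ℝ, ∀ hΘ : ∀ k, (Θ k).PosDef,
      fusedJGL (fun _ => n) S l1 l2 Θ ≤ fusedJGL (fun _ => n) S l1 l2 Θ0 →
      frobT (fun k => Θ k - Θs k) ≤ frobT (fun k => Θ0 k - Θs k) →
      ∀ k i, m ≤ (hΘ k).1.eigenvalues i ∧ (hΘ k).1.eigenvalues i ≤ M := by
  intro Θ hΘ hF hd
  have hub : ∀ k i, (hΘ k).1.eigenvalues i ≤ M := fun k i => by
    rw [hM]
    exact (eig_le_frobT Θ k _ i).trans (frobT_bound Θ Θs Θ0 hd)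
  intro k i
  refine ⟨?_, hub k i⟩
  have hpos : ∀ k i, 0 < (hΘ k).1.eigenvalues i := fun k i => (hΘ k).eigenvalues_pos i
  have hMpos : 0 < M := (hpos k i).trans_le (hub k i)
  have hl := (fused_lower S hS n hn l1 l2 hl1 hl2 Θ hΘ).trans hF
  have hdet : 0 < ∏ k, (Θ k).det := Finset.prod_pos fun k _ => (hΘ k).det_pos
  have hexp : Real.exp (-(fusedJGL (fun _ => n) S l1 l2 Θ0) / n) ≤ ∏ k, (Θ k).det := by
    rw [← Real.le_log_iff_exp_le hdet, div_le_iff₀ hn]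
    linarith
  have hprod : ∏ k, (Θ k).det =
      ∏ x : Fin K × Fin p, (hΘ x.1).1.eigenvalues x.2 := by
    rw [Fintype.prod_prod_type]
    refine Finset.prod_congr rfl fun k _ => ?_
    simpa using (hΘ k).1.det_eq_prod_eigenvalues
  have hle : ∏ k, (Θ k).det ≤ (hΘ k).1.eigenvalues i * M ^ (K * p - 1) := by
    rw [hprod, ← Finset.mul_prod_erase _ _ (Finset.mem_univ (k, i))]
    refine mul_le_mul_of_nonneg_left ?_ (hpos k i).le
    refine (Finset.prod_le_prod (fun x _ => (hpos x.1 x.2).le)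
      (fun x _ => hub x.1 x.2)).trans ?_
    simp [Finset.card_erase_of_mem]
  have hKp : 1 ≤ K * p := Nat.mul_pos (by omega) hp
  have hz : M ^ (1 - (K * p : ℤ)) = (M ^ (K * p - 1))⁻¹ := by
    rw [← zpow_natCast, ← _root_.zpow_neg]
    congr 1
    push_cast [Nat.cast_sub hKp]
    ring
  rw [hm, hz, ← div_eq_mul_inv, div_le_iff₀ (by positivity)]
  exact hexp.trans hle
end

section
/- Let S ∈ ℝ^{p×p} be symmetric positive semidefinite, λ > 0, let Θ* be a symmetric positive definite minimizer of the graphical lasso objective F over symmetric positive definite p×p matrices, and let Θ₀ be symmetric positive definite. Set M := ‖Θ*‖₂ + ‖Θ₀ − Θ*‖_F (spectral norm plus Frobenius distance) and m := e^{−F(Θ₀)} M^{−(p−1)}. Then every symmetric positive definite matrix Θ satisfying F(Θ) ≤ F(Θ₀) and ‖Θ − Θ*‖_F ≤ ‖Θ₀ − Θ*‖_F has all of its eigenvalues in the interval [m, M]. -/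
open Matrix Finset

/-- The graphical lasso objective `F(Θ) = -log det Θ + trace(SΘ) + λ Σ_{i≠j} |θ_ij|`. -/
noncomputable def glObj {p : ℕ} (S : Matrix (Fin p) (Fin p) ℝ) (l : ℝ)
    (Θ : Matrix (Fin p) (Fin p) ℝ) : ℝ :=
  -Real.log Θ.det + (S * Θ).trace + l * ∑ i, ∑ j, (if i ≠ j then |Θ i j| else 0)

/-- The spectral norm (largest singular value) of a real square matrix. -/
noncomputable def specNorm {p : ℕ} (A : Matrix (Fin p) (Fin p) ℝ) : ℝ :=
  ‖Matrix.toEuclideanCLM (𝕜 := ℝ) A‖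

/-- The Frobenius norm of a real matrix. -/
noncomputable def frob {p : ℕ} (A : Matrix (Fin p) (Fin p) ℝ) : ℝ :=
  Real.sqrt (∑ i, ∑ j, (A i j) ^ 2)

open scoped MatrixOrder Matrix.Norms.L2Operator in
lemma trace_mul_nonneg_aux {p : ℕ} {S T : Matrix (Fin p) (Fin p) ℝ} (hS : S.PosSemidef)
    (hT : T.PosSemidef) : 0 ≤ (S * T).trace := by
  obtain ⟨B, rfl⟩ := CStarAlgebra.nonneg_iff_eq_star_mul_self.mp hT.nonneg
  rw [← Matrix.mul_assoc, Matrix.trace_mul_comm, ← Matrix.mul_assoc]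
  exact (hS.mul_mul_conjTranspose_same B).trace_nonneg

lemma norm_le_frob_aux {p : ℕ} (A : Matrix (Fin p) (Fin p) ℝ) (v : EuclideanSpace ℝ (Fin p)) :
    ‖Matrix.toEuclideanCLM (𝕜 := ℝ) A v‖ ≤ frob A * ‖v‖ := by
  rw [EuclideanSpace.norm_eq, EuclideanSpace.norm_eq, frob, ← Real.sqrt_mul (by positivity)]
  apply Real.sqrt_le_sqrt
  rw [Finset.sum_mul]
  apply Finset.sum_le_sum
  intro i _
  rw [Matrix.ofLp_toEuclideanCLM]
  simp only [Real.norm_eq_abs, sq_abs]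
  exact Finset.sum_mul_sq_le_sq_mul_sq Finset.univ (fun j => A i j) (fun j => v j)

/-- Eigenvalue bounds on the level set of the graphical lasso objective. -/
theorem stmt5 {p : ℕ}
    (S : Matrix (Fin p) (Fin p) ℝ) (hS : S.PosSemidef) (l : ℝ) (hl : 0 < l)
    (Θs : Matrix (Fin p) (Fin p) ℝ) (hΘs : Θs.PosDef)
    (hmin : ∀ Θ : Matrix (Fin p) (Fin p) ℝ, Θ.PosDef → glObj S l Θs ≤ glObj S l Θ)
    (Θ0 : Matrix (Fin p) (Fin p) ℝ) (hΘ0 : Θ0.PosDef)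
    (M m : ℝ)
    (hM : M = specNorm Θs + frob (Θ0 - Θs))
    (hm : m = Real.exp (-(glObj S l Θ0)) * M ^ (-((p : ℤ) - 1))) :
    ∀ Θ : Matrix (Fin p) (Fin p) ℝ, ∀ hΘ : Θ.PosDef,
      glObj S l Θ ≤ glObj S l Θ0 → frob (Θ - Θs) ≤ frob (Θ0 - Θs) →
      ∀ i, m ≤ hΘ.1.eigenvalues i ∧ hΘ.1.eigenvalues i ≤ M := by
  intro Θ hΘ hF hfr
  have hpos : ∀ i, 0 < hΘ.1.eigenvalues i := fun i => hΘ.eigenvalues_pos i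
  have hup : ∀ i, hΘ.1.eigenvalues i ≤ M := by
    intro i
    set v := hΘ.1.eigenvectorBasis i with hv
    have hn : ‖v‖ = 1 := hΘ.1.eigenvectorBasis.orthonormal.1 i
    have h1 : Matrix.toEuclideanCLM (𝕜 := ℝ) Θ v = hΘ.1.eigenvalues i • v := by
      ext j
      rw [Matrix.ofLp_toEuclideanCLM, hv, hΘ.1.mulVec_eigenvectorBasis i]
      rfl
    have h2 : ‖Matrix.toEuclideanCLM (𝕜 := ℝ) Θ v‖ = hΘ.1.eigenvalues i := by
      rw [h1, norm_smul, hn, mul_one, Real.norm_of_nonneg (hpos i).le]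
    have h3 : Matrix.toEuclideanCLM (𝕜 := ℝ) Θ v = Matrix.toEuclideanCLM (𝕜 := ℝ) Θs v
        + Matrix.toEuclideanCLM (𝕜 := ℝ) (Θ - Θs) v := by
      rw [map_sub]; simp
    have h4 := (Matrix.toEuclideanCLM (𝕜 := ℝ) Θs).le_opNorm v
    have h5 := norm_le_frob_aux (Θ - Θs) v
    have h6 := norm_add_le (Matrix.toEuclideanCLM (𝕜 := ℝ) Θs v)
      (Matrix.toEuclideanCLM (𝕜 := ℝ) (Θ - Θs) v)
    rw [← h3, h2] at h6
    rw [hn, mul_one] at h4 h5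
    rw [hM, specNorm]
    linarith
  intro i
  refine ⟨?_, hup i⟩
  have hM0 : 0 < M := (hpos i).trans_le (hup i)
  have hdet : Real.exp (-(glObj S l Θ0)) ≤ Θ.det := by
    rw [← Real.le_log_iff_exp_le hΘ.det_pos]
    have ht := trace_mul_nonneg_aux hS hΘ.posSemidef
    have hs : 0 ≤ l * ∑ i, ∑ j, (if i ≠ j then |Θ i j| else 0) := by
      refine mul_nonneg hl.le (Finset.sum_nonneg fun i _ => Finset.sum_nonneg fun j _ => ?_)
      split_ifs <;> positivity
    have hF' := hF
    rw [glObj] at hF'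
    linarith
  have hprod : Θ.det ≤ hΘ.1.eigenvalues i * M ^ (p - 1) := by
    rw [hΘ.1.det_eq_prod_eigenvalues, ← Finset.mul_prod_erase _ _ (Finset.mem_univ i)]
    apply mul_le_mul_of_nonneg_left _ (hpos i).le
    calc _ ≤ ∏ j ∈ Finset.univ.erase i, M :=
          Finset.prod_le_prod (fun j _ => (hpos j).le) (fun j _ => hup j)
      _ = _ := by simp
  have hp : 1 ≤ p := by have := i.2; omega
  have hz : (-((p : ℤ) - 1)) = -((p - 1 : ℕ) : ℤ) := by push_cast [hp]; ring
  rw [hm, hz, _root_.zpow_neg, _root_.zpow_natCast, ← div_eq_mul_inv, div_le_iff₀ (pow_pos hM0 _)]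
  exact hdet.trans hprod
end
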